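/- arXiv:2507.02889 — 2 statements merged into one kernel-verified Lean document; each statement's English description precedes it below -/
import Mathlib

section
/- Let α > 0, β > 0, γ > 0, λ ∈ ℝ, and let s > 0 be a real number with |λ| < s^α. Then ∫₀^∞ e^{−st} · (∑_{k=0}^∞ (Γ(γ+k)/(Γ(γ) · k!)) · λ^k · t^{αk+β−1} · (ln t − ψ(αk+β)) / Γ(αk+β)) dt = − s^{αγ−β} · ln s / (s^α − λ)^γ. (The integrand series is the term-by-term derivative with respect to β of t^{β−1} E^γ_{α,β}(λ t^α).) -/
open Real MeasureTheory

/-- The digamma function `ψ(x) = the logarithmic derivative of Γ`, i.e. the derivative of `log ∘ Γ`. -/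
noncomputable def digamma (x : ℝ) : ℝ := deriv (fun y : ℝ => Real.log (Real.Gamma y)) x

open Filter Topology Set

lemma coef_eq (γ : ℝ) (hγ : 0 < γ) (k : ℕ) :
    Ring.choose (γ + k - 1) k = Real.Gamma (γ + k) / (Real.Gamma γ * k.factorial) := by
  have h1 : Ring.choose (γ + k - 1) k = Ring.multichoose γ k := by
    rw [Ring.choose]; congr 1; ring
  have h2 := Ring.factorial_nsmul_multichoose_eq_ascPochhammer γ k
  rw [Polynomial.ascPochhammer_smeval_eq_eval, nsmul_eq_mul] at h2
  have h3 : Real.Gamma (γ + k) = Real.Gamma γ * (ascPochhammer ℝ k).eval γ := by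
    clear h1 h2
    induction k with
    | zero => simp
    | succ n ih =>
      rw [ascPochhammer_succ_eval, ← mul_assoc, ← ih]
      push_cast
      rw [← add_assoc, Real.Gamma_add_one (by positivity)]
      ring
  have := (Real.Gamma_pos_of_pos hγ).ne'
  rw [h1, h3, ← h2]
  field_simp

lemma hasSum_coef (γ x : ℝ) (hγ : 0 < γ) (hx : |x| < 1) :
    HasSum (fun k : ℕ => Real.Gamma (γ + k) / (Real.Gamma γ * k.factorial) * x ^ k)
      (1 / (1 - x) ^ γ) := by
  have h := (Real.one_div_one_sub_rpow_hasFPowerSeriesOnBall_zero γ).hasSum (y := x)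
    (by simpa [enorm_eq_nnnorm] using! hx)
  simp only [zero_add] at h
  refine h.congr_fun ?_
  intro k
  simp [← coef_eq γ hγ, FormalMultilinearSeries.ofScalars]

lemma summable_coef_mul (γ x : ℝ) (hγ : 0 < γ) (hx : |x| < 1) :
    Summable (fun k : ℕ => Real.Gamma (γ + k) / (Real.Gamma γ * k.factorial) * x ^ k * k) := by
  rw [← summable_nat_add_iff 1]
  refine ((hasSum_coef (γ + 1) x (by linarith) hx).summable.mul_left (γ * x)).congr ?_
  intro k
  have := (Real.Gamma_pos_of_pos hγ).ne'
  rw [Real.Gamma_add_one hγ.ne', Nat.factorial_succ]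
  push_cast
  rw [show γ + ((k : ℝ) + 1) = γ + 1 + k by ring]
  field_simp
  ring

lemma diff_logGamma {b : ℝ} (hb : 0 < b) :
    HasDerivAt (fun y : ℝ => Real.log (Real.Gamma y)) (digamma b) b := by
  apply DifferentiableAt.hasDerivAt
  refine (Real.differentiableAt_Gamma fun m => ?_).log (Real.Gamma_pos_of_pos hb).ne'
  have : (0:ℝ) ≤ m := m.cast_nonneg
  linarith

lemma digamma_mono {a b : ℝ} (ha : 0 < a) (hab : a ≤ b) : digamma a ≤ digamma b := by
  have h : MonotoneOn (deriv (Real.log ∘ Real.Gamma)) (Ioi 0) :=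
    Real.convexOn_log_Gamma.monotoneOn_deriv
      (fun x hx => (diff_logGamma hx).differentiableAt)
  exact h ha (ha.trans_le hab) hab

lemma hasDerivAt_Gamma' {b : ℝ} (hb : 0 < b) :
    HasDerivAt Real.Gamma (Real.Gamma b * digamma b) b := by
  have h : DifferentiableAt ℝ Real.Gamma b := Real.differentiableAt_Gamma fun m => by
    have : (0:ℝ) ≤ m := m.cast_nonneg
    linarith
  have hp := (Real.Gamma_pos_of_pos hb).ne'
  have h1 := h.hasDerivAt.log hp
  have := h1.unique (diff_logGamma hb)
  rw [← this, mul_div_cancel₀ _ hp]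
  exact h.hasDerivAt

lemma log_integral {b s : ℝ} (hb : 0 < b) (hs : 0 < s) :
    IntegrableOn (fun t : ℝ => t ^ (b - 1) * (Real.log t * Real.exp (-(s * t)))) (Ioi 0) ∧
    ∫ t in Ioi (0:ℝ), t ^ (b - 1) * (Real.log t * Real.exp (-(s * t))) =
      s ^ (-b) * Real.Gamma b * (digamma b - Real.log s) := by
  have key := mellin_hasDerivAt_of_isBigO_rpow (E := ℂ) (a := b + 1) (b := 0) (s := (b : ℂ))
    (f := fun t : ℝ => ((Real.exp (-(s * t)) : ℝ) : ℂ))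
    ((Continuous.continuousOn (by fun_prop)).locallyIntegrableOn measurableSet_Ioi)
    (by
      rw [← Asymptotics.isBigO_norm_left]
      simp_rw [Complex.norm_real, Asymptotics.isBigO_norm_left]
      simpa only [neg_mul] using (isLittleO_exp_neg_mul_rpow_atTop hs (-(b+1))).isBigO)
    (by simp)
    (by
      simp_rw [neg_zero, Real.rpow_zero]
      refine Asymptotics.isBigO_const_of_tendsto (?_ : Tendsto _ _ (𝓝 (1 : ℂ))) one_ne_zero
      have : Continuous (fun t : ℝ => ((Real.exp (-(s * t)) : ℝ) : ℂ)) := by fun_prop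
      have h := this.tendsto 0
      simp only [mul_zero, neg_zero, Real.exp_zero, Complex.ofReal_one] at h
      exact h.mono_left nhdsWithin_le_nhds)
    (by simpa using hb)
  have hcongr : ∀ t ∈ Ioi (0:ℝ), (t : ℂ) ^ ((b : ℂ) - 1) • (Real.log t • ((Real.exp (-(s * t)) : ℝ) : ℂ))
      = ((t ^ (b - 1) * (Real.log t * Real.exp (-(s * t))) : ℝ) : ℂ) := by
    intro t ht
    rw [Complex.ofReal_mul, Complex.ofReal_cpow (le_of_lt ht)]
    simp
  constructor
  · have h := key.1
    rw [MellinConvergent, integrableOn_congr_fun hcongr measurableSet_Ioi] at h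
    exact h.re.congr (ae_of_all _ fun t => Complex.ofReal_re _)
  · have h2 := key.2.real_of_complex
    have e : mellin (fun t : ℝ => Real.log t • ((Real.exp (-(s * t)) : ℝ) : ℂ)) (b : ℂ) =
      ((∫ t in Ioi (0:ℝ), t ^ (b - 1) * (Real.log t * Real.exp (-(s * t))) : ℝ) : ℂ) := by
      rw [mellin, setIntegral_congr_fun measurableSet_Ioi hcongr]
      exact integral_ofReal
    rw [e, Complex.ofReal_re] at h2
    have h3 : HasDerivAt (fun x : ℝ => s ^ (-x) * Real.Gamma x)
        (s ^ (-b) * Real.Gamma b * (digamma b - Real.log s)) b := by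
      have h4 := ((hasDerivAt_neg b).const_rpow hs).mul (hasDerivAt_Gamma' hb)
      exact h4.congr_deriv (by ring)
    refine h2.unique (h3.congr_of_eventuallyEq ?_)
    filter_upwards [lt_mem_nhds hb] with x hx
    have h5 : mellin (fun t : ℝ => ((Real.exp (-(s * t)) : ℝ) : ℂ)) (x : ℂ) =
        ((∫ t in Ioi (0:ℝ), t ^ (x - 1) * Real.exp (-(s * t)) : ℝ) : ℂ) := by
      rw [mellin]
      refine Eq.trans ?_ integral_ofReal
      refine setIntegral_congr_fun measurableSet_Ioi fun t ht => ?_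
      simp only [smul_eq_mul]
      simp [Complex.ofReal_cpow (le_of_lt ht)]
    rw [h5, Complex.ofReal_re, Real.integral_rpow_mul_exp_neg_mul_Ioi hx hs, one_div,
      Real.inv_rpow hs.le, Real.rpow_neg hs.le]

lemma pow_integrable {b s : ℝ} (hb : 0 < b) (hs : 0 < s) :
    IntegrableOn (fun t : ℝ => t ^ (b - 1) * Real.exp (-(s * t))) (Ioi 0) := by
  have := integrableOn_rpow_mul_exp_neg_mul_rpow (p := 1) (s := b - 1) (b := s)
    (by linarith) one_pos hs
  simpa using this

lemma pow_integral {b s : ℝ} (hb : 0 < b) (hs : 0 < s) :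
    ∫ t in Ioi (0:ℝ), t ^ (b - 1) * Real.exp (-(s * t)) = s ^ (-b) * Real.Gamma b := by
  rw [Real.integral_rpow_mul_exp_neg_mul_Ioi hb hs, one_div,
      Real.inv_rpow hs.le, Real.rpow_neg hs.le]

/-- the basic kernel -/
noncomputable def lapKer (s b t : ℝ) : ℝ :=
  Real.exp (-(s * t)) * (t ^ (b - 1) * (Real.log t - digamma b) / Real.Gamma b)

lemma ker_eq (s b t : ℝ) : lapKer s b t = (Real.Gamma b)⁻¹ *
    (t ^ (b - 1) * (Real.log t * Real.exp (-(s * t)))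
      - digamma b * (t ^ (b - 1) * Real.exp (-(s * t)))) := by
  rw [lapKer]; ring

lemma ker_integrable {b s : ℝ} (hb : 0 < b) (hs : 0 < s) : IntegrableOn (lapKer s b) (Ioi 0) := by
  have := ((log_integral hb hs).1.sub ((pow_integrable hb hs).const_mul (digamma b))).const_mul
    (Real.Gamma b)⁻¹
  refine this.congr (ae_of_all _ fun t => ?_)
  simp [ker_eq]

lemma ker_integral {b s : ℝ} (hb : 0 < b) (hs : 0 < s) :
    ∫ t in Ioi (0:ℝ), lapKer s b t = -(s ^ (-b) * Real.log s) := by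
  simp_rw [ker_eq]
  rw [integral_const_mul, integral_sub (log_integral hb hs).1
    ((pow_integrable hb hs).const_mul (digamma b)), integral_const_mul, (log_integral hb hs).2,
    pow_integral hb hs]
  have := (Real.Gamma_pos_of_pos hb).ne'
  field_simp
  ring

lemma ker_norm {a b s : ℝ} (ha : 0 < a) (hab : a ≤ b) (hs : 0 < s) :
    ∫ t in Ioi (0:ℝ), |lapKer s b t| ≤ s ^ (-b) * (2 * b / s + 2 * |digamma a| + Real.log s) := by
  have hb : 0 < b := ha.trans_le hab
  have hG := Real.Gamma_pos_of_pos hb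
  have i1 := ((pow_integrable (b := b + 1) (by linarith) hs).const_mul (2 * (Real.Gamma b)⁻¹))
  have i2 := ((pow_integrable hb hs).const_mul (2 * |digamma a| * (Real.Gamma b)⁻¹))
  have i3 := ker_integrable hb hs
  have hle : ∫ t in Ioi (0:ℝ), |lapKer s b t| ≤ ∫ t in Ioi (0:ℝ),
      ((2 * (Real.Gamma b)⁻¹ * (t ^ (b + 1 - 1) * Real.exp (-(s * t))) +
      2 * |digamma a| * (Real.Gamma b)⁻¹ * (t ^ (b - 1) * Real.exp (-(s * t)))) - lapKer s b t) := by
    refine setIntegral_mono_on i3.abs ((i1.add i2).sub i3) measurableSet_Ioi fun t ht => ?_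
    have ht : 0 < t := ht
    have e : t ^ (b + 1 - 1) = t ^ (b - 1) * t := by
      rw [← Real.rpow_add_one ht.ne']; congr 1; ring
    have h1 : |Real.log t - digamma b| ≤ 2 * t + 2 * |digamma a| - (Real.log t - digamma b) := by
      have := digamma_mono ha hab
      have h2 := neg_abs_le (digamma a)
      have h3 := Real.log_le_sub_one_of_pos ht
      have h4 := abs_nonneg (digamma a)
      rw [abs_le]; constructor <;> linarith
    have hw : 0 ≤ Real.exp (-(s * t)) * t ^ (b - 1) * (Real.Gamma b)⁻¹ := by positivity
    have hk : lapKer s b t = Real.exp (-(s * t)) * t ^ (b - 1) * (Real.Gamma b)⁻¹ *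
      (Real.log t - digamma b) := by rw [lapKer]; ring
    rw [hk, abs_mul, abs_of_nonneg hw, e]
    calc _ ≤ _ := mul_le_mul_of_nonneg_left h1 hw
      _ = _ := by ring
  refine hle.trans (le_of_eq ?_)
  rw [integral_sub (i1.fun_add i2) i3, integral_add i1 i2, integral_const_mul, integral_const_mul,
    pow_integral hb hs, pow_integral (by linarith) hs, ker_integral hb hs,
    Real.Gamma_add_one hb.ne', show -(b + 1) = -b - 1 by ring, Real.rpow_sub_one hs.ne']
  field_simp
  ring

theorem laplace_deriv_beta_Prabhakar (α β γ lam s : ℝ) (hα : 0 < α) (hβ : 0 < β)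
    (hγ : 0 < γ) (hs : 0 < s) (hlam : |lam| < s ^ α) :
    (∫ t in Set.Ioi (0 : ℝ), Real.exp (-(s * t)) *
        ∑' k : ℕ, (Real.Gamma (γ + k) / (Real.Gamma γ * k.factorial)) *
          (lam ^ k * t ^ (α * k + β - 1) *
            (Real.log t - digamma (α * k + β)) / Real.Gamma (α * k + β)))
      = -(s ^ (α * γ - β) * Real.log s / (s ^ α - lam) ^ γ) := by
  have hsα : 0 < s ^ α := Real.rpow_pos_of_pos hs _
  set c : ℕ → ℝ := fun k => Real.Gamma (γ + k) / (Real.Gamma γ * k.factorial) with hc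
  have hc0 : ∀ k, 0 ≤ c k := fun k => by
    have h1 := Real.Gamma_pos_of_pos hγ
    have h2 : 0 < Real.Gamma (γ + k) := Real.Gamma_pos_of_pos (by positivity)
    simp only [hc]; positivity
  have hle : ∀ k : ℕ, β ≤ α * k + β := fun k => by
    have : 0 ≤ α * (k:ℝ) := by positivity
    linarith
  have hpos : ∀ k : ℕ, 0 < α * k + β := fun k => hβ.trans_le (hle k)
  have hpow : ∀ k : ℕ, s ^ (-(α * k + β)) = s ^ (-β) * ((s ^ α)⁻¹) ^ k := fun k => by
    rw [show -(α * k + β) = -β + -(α * k) by ring, Real.rpow_add hs, Real.rpow_neg hs.le (α * k),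
      Real.rpow_mul_natCast hs.le, inv_pow]
  set F : ℕ → ℝ → ℝ := fun k t => c k * lam ^ k * lapKer s (α * k + β) t with hF
  have hx : |lam / s ^ α| < 1 := by
    rw [abs_div, abs_of_pos hsα, div_lt_one hsα]; exact hlam
  have hx' : |(|lam| / s ^ α)| < 1 := by
    rw [abs_div, abs_abs, abs_of_pos hsα, div_lt_one hsα]; exact hlam
  have hint : ∀ k, Integrable (F k) (volume.restrict (Ioi 0)) := fun k =>
    (ker_integrable (hpos k) hs).const_mul _
  have hsum : Summable fun k => ∫ t in Ioi (0:ℝ), ‖F k t‖ := by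
    have S := ((summable_coef_mul γ _ hγ hx').mul_left (s ^ (-β) * (2 * α / s))).add
      ((hasSum_coef γ _ hγ hx').summable.mul_left
        (s ^ (-β) * (2 * β / s + 2 * |digamma β| + Real.log s)))
    refine Summable.of_nonneg_of_le (fun k => integral_nonneg fun t => norm_nonneg _) (fun k => ?_) S
    have e : ∀ t, ‖F k t‖ = c k * |lam| ^ k * |lapKer s (α * k + β) t| := fun t => by
      simp only [hF, Real.norm_eq_abs, abs_mul, abs_pow, abs_of_nonneg (hc0 k)]
    simp_rw [e]
    rw [integral_const_mul]
    have := mul_le_mul_of_nonneg_left (ker_norm hβ (hle k) hs)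
      (mul_nonneg (hc0 k) (pow_nonneg (abs_nonneg lam) k))
    refine this.trans (le_of_eq ?_)
    rw [hpow, div_eq_mul_inv |lam|, mul_pow]
    simp only [hc]
    ring
  have H := hasSum_integral_of_summable_integral_norm hint hsum
  have e1 : ∀ k, ∫ t in Ioi (0:ℝ), F k t = -(s ^ (-β) * Real.log s) * (c k * (lam / s ^ α) ^ k) := by
    intro k
    simp only [hF]
    rw [integral_const_mul, ker_integral (hpos k) hs, hpow, div_eq_mul_inv lam, mul_pow]
    ring
  simp_rw [e1] at H
  have H2 := H.unique ((hasSum_coef γ _ hγ hx).mul_left (-(s ^ (-β) * Real.log s)))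
  have e2 : ∀ t, Real.exp (-(s * t)) *
        ∑' k : ℕ, c k * (lam ^ k * t ^ (α * k + β - 1) *
            (Real.log t - digamma (α * k + β)) / Real.Gamma (α * k + β)) = ∑' k, F k t := by
    intro t
    rw [← tsum_mul_left]
    refine tsum_congr fun k => ?_
    simp only [hF, lapKer]
    ring
  have hd : 0 < s ^ α - lam := by linarith [le_abs_self lam]
  calc _ = ∫ t in Ioi (0:ℝ), ∑' k, F k t := by
        refine integral_congr_ae (ae_of_all _ fun t => e2 t)
    _ = _ := H2
    _ = _ := by
      rw [show 1 - lam / s ^ α = (s ^ α - lam) / s ^ α by field_simp,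
        Real.div_rpow hd.le hsα.le, ← Real.rpow_mul hs.le, sub_eq_add_neg (α * γ),
        Real.rpow_add hs, one_div_div]
      ring
end

section
/- Let α > 0, β > 1, let λ ∈ ℝ, and let t > 0. Then ∑_{k=0}^∞ λ^k · t^{αk+β−1} · (ln t − ψ(αk+β)) / Γ(αk+β) = ∫₀^t (ln(t − t₁) + γ₀) · t₁^{β−2} · (∑_{k=0}^∞ (λ t₁^α)^k / Γ(αk + β − 1)) dt₁; that is, the term-by-term derivative with respect to β of t^{β−1} E_{α,β}(λ t^α) equals the convolution ∫₀^t (ln(t−t₁) + γ₀) · t₁^{β−2} · E_{α,β−1}(λ t₁^α) dt₁. -/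
open Real MeasureTheory

open Filter Topology in
lemma aux_int (t a b : ℝ) (ht : 0 < t) (ha : 0 < a) (hb : 0 < b) :
    IntervalIntegrable (fun u : ℝ => (t - u) ^ (a - 1) * u ^ (b - 1)) volume 0 t := by
  have h1 : ∀ c d : ℝ, 0 < d →
      IntervalIntegrable (fun u : ℝ => (t - u) ^ (c - 1) * u ^ (d - 1)) volume 0 (t / 2) := by
    intro c d hd
    refine (intervalIntegral.intervalIntegrable_rpow' (r := d - 1) (by linarith)).continuousOn_mul ?_
    refine ContinuousOn.rpow_const (by fun_prop) ?_
    intro u hu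
    rw [Set.uIcc_of_le (by linarith)] at hu
    left
    linarith [hu.2]
  refine (h1 a b hb).trans ?_
  have h2 := (h1 b a ha).comp_sub_left t
  have h3 := h2.symm
  convert! h3 using 1
  · funext u
    simp only [sub_sub_cancel]
    ring
  · ring
  · ring

lemma aux_beta (t a b : ℝ) (ht : 0 < t) (ha : 0 < a) (hb : 0 < b) :
    (∫ u in (0:ℝ)..t, (t - u) ^ (a - 1) * u ^ (b - 1))
      = t ^ (a + b - 1) * (Real.Gamma a * Real.Gamma b / Real.Gamma (a + b)) := by
  have h := Complex.betaIntegral_scaled (b : ℂ) (a : ℂ) ht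
  rw [Complex.betaIntegral_eq_Gamma_mul_div _ _ (by simpa using hb) (by simpa using ha)] at h
  have h2 : (∫ u in (0:ℝ)..t, ((u : ℂ) ^ ((b : ℂ) - 1) * ((t : ℂ) - u) ^ ((a : ℂ) - 1)))
      = ∫ u in (0:ℝ)..t, (((t - u) ^ (a - 1) * u ^ (b - 1) : ℝ) : ℂ) := by
    refine intervalIntegral.integral_congr fun u hu => ?_
    rw [Set.uIcc_of_le ht.le] at hu
    rw [Complex.ofReal_mul, Complex.ofReal_cpow hu.1, Complex.ofReal_cpow (by linarith [hu.2])]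
    push_cast
    ring
  rw [h2, intervalIntegral.integral_ofReal] at h
  have h3 : ((t : ℂ) ^ ((b : ℂ) + a - 1)) = ((t ^ (a + b - 1) : ℝ) : ℂ) := by
    rw [Complex.ofReal_cpow ht.le]
    push_cast
    ring_nf
  rw [h3, ← Complex.ofReal_add, Complex.Gamma_ofReal, Complex.Gamma_ofReal,
    Complex.Gamma_ofReal] at h
  have h4 := h
  norm_cast at h4
  rw [h4, add_comm b a, mul_comm (Real.Gamma b)]

lemma aux_log (v : ℝ) (hv : 0 < v) :
    |Real.log v| ≤ 4 * (v ^ (1 / 4 : ℝ) + v ^ (-(1 / 4) : ℝ)) := by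
  have e : (0:ℝ) < 1 / 4 := by norm_num
  have h1 := Real.log_le_rpow_div hv.le e
  have h2 := Real.log_le_rpow_div (inv_pos.2 hv).le e
  rw [Real.log_inv, Real.inv_rpow hv.le, ← Real.rpow_neg hv.le] at h2
  have p1 := Real.rpow_pos_of_pos hv (1 / 4)
  have p2 := Real.rpow_pos_of_pos hv (-(1 / 4))
  rw [abs_le]
  constructor <;> linarith

lemma aux_pow (v x : ℝ) (hv : 0 < v) (hx : |x| ≤ 1 / 4) :
    v ^ x ≤ v ^ (1 / 4 : ℝ) + v ^ (-(1 / 4) : ℝ) := by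
  have p1 := Real.rpow_pos_of_pos hv (1 / 4)
  have p2 := Real.rpow_pos_of_pos hv (-(1 / 4))
  rw [abs_le] at hx
  rcases le_total 1 v with h | h
  · have := Real.rpow_le_rpow_of_exponent_le h hx.2
    linarith
  · have := Real.rpow_le_rpow_of_exponent_ge hv h hx.1
    linarith

lemma aux_dui (t b : ℝ) (ht : 0 < t) (hb : 0 < b) :
    IntervalIntegrable (fun u : ℝ => Real.log (t - u) * u ^ (b - 1)) volume 0 t ∧
    HasDerivAt (fun x : ℝ => ∫ u in (0:ℝ)..t, (t - u) ^ (x - 1) * u ^ (b - 1))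
      (∫ u in (0:ℝ)..t, Real.log (t - u) * u ^ (b - 1)) 1 := by
  have hne : ∀ᵐ u : ℝ, u ≠ t := by
    simp [ae_iff]
  have key := intervalIntegral.hasDerivAt_integral_of_dominated_loc_of_deriv_le
    (μ := volume) (a := 0) (b := t) (x₀ := (1:ℝ)) (s := Metric.ball 1 (1 / 4))
    (F := fun x u : ℝ => (t - u) ^ (x - 1) * u ^ (b - 1))
    (F' := fun x u : ℝ => ((t - u) ^ (x - 1) * Real.log (t - u)) * u ^ (b - 1))
    (bound := fun u => 4 * ((t - u) ^ ((3 / 2 : ℝ) - 1) * u ^ (b - 1)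
      + 2 * ((t - u) ^ ((1 : ℝ) - 1) * u ^ (b - 1))
      + ((t - u) ^ ((1 / 2 : ℝ) - 1) * u ^ (b - 1))))
    (Metric.ball_mem_nhds _ (by norm_num))
    (Filter.Eventually.of_forall fun x => by
      apply Measurable.aestronglyMeasurable; fun_prop)
    (aux_int t 1 b ht one_pos hb)
    (by apply Measurable.aestronglyMeasurable; fun_prop)
    ?_ ?_ ?_
  · simpa using key
  · filter_upwards [hne] with u hu hu2 x hx
    rw [Set.uIoc_of_le ht.le] at hu2
    have hv : 0 < t - u := sub_pos.2 (lt_of_le_of_ne hu2.2 hu)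
    have hx' : |x - 1| ≤ 1 / 4 := by
      rw [Metric.mem_ball, Real.dist_eq] at hx; exact hx.le
    have a1 := aux_log _ hv
    have a2 := aux_pow _ _ hv hx'
    have p0 := Real.rpow_pos_of_pos hv (x - 1)
    have p1 := Real.rpow_pos_of_pos hv (1 / 4)
    have p2 := Real.rpow_pos_of_pos hv (-(1 / 4))
    have pu := Real.rpow_pos_of_pos hu2.1 (b - 1)
    rw [norm_mul, norm_mul, Real.norm_eq_abs, Real.norm_eq_abs, Real.norm_eq_abs,
      abs_of_pos p0, abs_of_pos pu]
    have e1 : (t - u) ^ ((3 / 2 : ℝ) - 1) = (t - u) ^ (1 / 4 : ℝ) * (t - u) ^ (1 / 4 : ℝ) := by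
      rw [← Real.rpow_add hv]; norm_num
    have e2 : (t - u) ^ ((1 : ℝ) - 1) = (t - u) ^ (1 / 4 : ℝ) * (t - u) ^ (-(1 / 4) : ℝ) := by
      rw [← Real.rpow_add hv]; norm_num
    have e3 : (t - u) ^ ((1 / 2 : ℝ) - 1)
        = (t - u) ^ (-(1 / 4) : ℝ) * (t - u) ^ (-(1 / 4) : ℝ) := by
      rw [← Real.rpow_add hv]; norm_num
    rw [e1, e2, e3]
    have := mul_le_mul_of_nonneg_right (mul_le_mul a2 a1 (abs_nonneg _) (by positivity)) pu.le
    refine this.trans (le_of_eq ?_)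
    ring
  · exact (((aux_int t _ b ht (by norm_num) hb).add
      ((aux_int t _ b ht (by norm_num) hb).const_mul 2)).add
      (aux_int t _ b ht (by norm_num) hb)).const_mul 4
  · filter_upwards [hne] with u hu hu2 x hx
    rw [Set.uIoc_of_le ht.le] at hu2
    have hv : 0 < t - u := sub_pos.2 (lt_of_le_of_ne hu2.2 hu)
    have h1 : HasDerivAt (fun x : ℝ => x - 1) 1 x := (hasDerivAt_id x).sub_const 1
    have := (h1.const_rpow hv).mul_const (u ^ (b - 1))
    convert! this using 1
    ring

lemma aux_dG (s : ℝ) (hs : 0 < s) : HasDerivAt Real.Gamma (digamma s * Real.Gamma s) s := by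
  have hd : DifferentiableAt ℝ Real.Gamma s := Real.differentiableAt_Gamma (fun m => by
    have : (0:ℝ) ≤ m := Nat.cast_nonneg m
    linarith)
  have hG := (Real.Gamma_pos_of_pos hs).ne'
  have : digamma s = deriv Real.Gamma s / Real.Gamma s := (hd.hasDerivAt.log hG).deriv
  rw [this, div_mul_cancel₀ _ hG]
  exact hd.hasDerivAt

lemma aux_val (t b : ℝ) (ht : 0 < t) (hb : 0 < b) :
    (∫ u in (0:ℝ)..t, (Real.log (t - u) + Real.eulerMascheroniConstant) * u ^ (b - 1))
      = t ^ b * (Real.log t - digamma (b + 1)) * (Real.Gamma b / Real.Gamma (b + 1)) := by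
  obtain ⟨hi, hd⟩ := aux_dui t b ht hb
  have hG := (Real.Gamma_pos_of_pos (by linarith : 0 < 1 + b)).ne'
  have h1 : HasDerivAt (fun x : ℝ => x + b - 1) 1 1 := ((hasDerivAt_id 1).add_const b).sub_const 1
  have h2 : HasDerivAt (fun x : ℝ => x + b) 1 1 := ((hasDerivAt_id 1).add_const b)
  have h3 := HasDerivAt.comp (1:ℝ) (aux_dG (1 + b) (by linarith)) h2
  have h4 := (h1.const_rpow ht).mul ((Real.hasDerivAt_Gamma_one.mul_const (Real.Gamma b)).div h3 hG)
  have h5 := h4.congr_of_eventuallyEq (f₁ := fun x : ℝ => ∫ u in (0:ℝ)..t, (t - u) ^ (x - 1) * u ^ (b - 1)) (by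
    filter_upwards [lt_mem_nhds (zero_lt_one (α := ℝ))] with x hx
    exact aux_beta t x b ht hx hb)
  have h6 := hd.unique h5
  have h7 : (∫ u in (0:ℝ)..t, u ^ (b - 1)) = t ^ b * (Real.Gamma b / Real.Gamma (1 + b)) := by
    have := aux_beta t 1 b ht one_pos hb
    simpa using this
  simp_rw [add_mul]
  rw [intervalIntegral.integral_add hi
    ((intervalIntegral.intervalIntegrable_rpow' (by linarith)).const_mul _),
    intervalIntegral.integral_const_mul, h6, h7, add_comm b 1]
  simp only [Function.comp, Pi.div_apply, Real.Gamma_one, add_sub_cancel_left]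
  field_simp
  ring

lemma aux_Gamma_ge (R y : ℝ) (hR : 0 < R) (hy : 1 ≤ y) :
    Real.exp (-R) * R ^ (y - 1) ≤ Real.Gamma y := by
  have hc := Real.GammaIntegral_convergent (by linarith : 0 < y)
  have hsub : Set.Ioi R ⊆ Set.Ioi 0 := Set.Ioi_subset_Ioi hR.le
  rw [Real.Gamma_eq_integral (by linarith), ← integral_exp_neg_Ioi, ← integral_mul_const]
  calc _ ≤ ∫ x in Set.Ioi R, Real.exp (-x) * x ^ (y - 1) := by
        refine setIntegral_mono_on ?_ (hc.mono_set hsub) measurableSet_Ioi ?_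
        · exact (integrableOn_exp_neg_Ioi R).mul_const _
        · intro x hx
          gcongr
          exact le_of_lt hx
    _ ≤ _ := by
        refine setIntegral_mono_set hc ?_ hsub.eventuallyLE
        rw [Filter.EventuallyLE, ae_restrict_iff' measurableSet_Ioi]
        refine Filter.Eventually.of_forall fun x hx => ?_
        have := Real.rpow_pos_of_pos hx (y - 1)
        simp only [Pi.zero_apply]
        positivity

lemma aux_summable (α b x : ℝ) (hα : 0 < α) (hb : 0 < b) :
    Summable (fun k : ℕ => x ^ k / Real.Gamma (α * k + b)) := by
  set A : ℝ := 2 * |x| + 1 with hA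
  have hA0 : 0 < A := by positivity
  set R : ℝ := A ^ (1 / α) with hR
  have hR0 : 0 < R := Real.rpow_pos_of_pos hA0 _
  have hRA : R ^ α = A := by
    rw [hR, ← Real.rpow_mul hA0.le, one_div, inv_mul_cancel₀ hα.ne', Real.rpow_one]
  have hgeo : Summable (fun k : ℕ => (Real.exp R * R ^ (1 - b)) * (|x| / A) ^ k) := by
    refine (summable_geometric_of_lt_one (by positivity) ?_).mul_left _
    rw [div_lt_one hA0]
    linarith [abs_nonneg x]
  refine hgeo.of_norm_bounded_eventually_nat ?_
  obtain ⟨N, hN⟩ := exists_nat_gt (1 / α)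
  filter_upwards [Filter.eventually_ge_atTop N] with k hk
  have hk' : 1 / α < k := lt_of_lt_of_le hN (by exact_mod_cast hk)
  have hy : 1 ≤ α * k + b := by
    rw [div_lt_iff₀ hα] at hk'
    linarith [mul_comm α k]
  have h := aux_Gamma_ge R _ hR0 hy
  have hpos : 0 < Real.exp (-R) * R ^ (α * k + b - 1) :=
    mul_pos (Real.exp_pos _) (Real.rpow_pos_of_pos hR0 _)
  rw [norm_div, norm_pow, Real.norm_eq_abs, Real.norm_eq_abs,
    abs_of_pos (hpos.trans_le h)]
  refine (div_le_div_of_nonneg_left (by positivity) hpos h).trans (le_of_eq ?_)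
  have e1 : R ^ (α * k + b - 1) = A ^ k * (R ^ (1 - b))⁻¹ := by
    rw [← Real.rpow_neg hR0.le, ← hRA, ← Real.rpow_mul_natCast hR0.le, ← Real.rpow_add hR0]
    ring_nf
  have := Real.rpow_pos_of_pos hR0 (1 - b)
  rw [e1, Real.exp_neg, div_pow]
  field_simp

theorem deriv_beta_ML_convolution (α β lam t : ℝ) (hα : 0 < α) (hβ : 1 < β)
    (ht : 0 < t) :
    (∑' k : ℕ, lam ^ k * t ^ (α * k + β - 1) *
        (Real.log t - digamma (α * k + β)) / Real.Gamma (α * k + β))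
      = ∫ t₁ in (0 : ℝ)..t,
          (Real.log (t - t₁) + Real.eulerMascheroniConstant) * t₁ ^ (β - 2) *
            ∑' k : ℕ, (lam * t₁ ^ α) ^ k / Real.Gamma (α * k + β - 1) := by
  have hs : ∀ k : ℕ, 0 < α * k + β - 1 := fun k => by
    have : 0 ≤ α * (k : ℝ) := by positivity
    linarith
  have hsum : ∀ x : ℝ, Summable (fun k : ℕ => x ^ k / Real.Gamma (α * k + β - 1)) := by
    intro x
    have := aux_summable α (β - 1) x hα (by linarith)
    simpa only [add_sub_assoc] using this
  have hint : IntervalIntegrable (fun u : ℝ =>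
      (Real.log (t - u) + Real.eulerMascheroniConstant) * u ^ (β - 2)) volume 0 t := by
    have h1 := (aux_dui t (β - 1) ht (by linarith)).1
    have h2 : IntervalIntegrable (fun u : ℝ => u ^ (β - 1 - 1)) volume 0 t :=
      intervalIntegral.intervalIntegrable_rpow' (by linarith)
    have h3 := h1.add (h2.const_mul Real.eulerMascheroniConstant)
    convert! h3 using 1
    funext u
    rw [show β - 1 - 1 = β - 2 by ring]
    ring
  have key := intervalIntegral.hasSum_integral_of_dominated_convergence (μ := volume)
    (a := 0) (b := t)
    (F := fun (k : ℕ) (u : ℝ) =>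
      (Real.log (t - u) + Real.eulerMascheroniConstant) * u ^ (β - 2) *
        ((lam * u ^ α) ^ k / Real.Gamma (α * k + β - 1)))
    (f := fun u => (Real.log (t - u) + Real.eulerMascheroniConstant) * u ^ (β - 2) *
            ∑' k : ℕ, (lam * u ^ α) ^ k / Real.Gamma (α * k + β - 1))
    (fun (k : ℕ) (u : ℝ) =>
      ‖(Real.log (t - u) + Real.eulerMascheroniConstant) * u ^ (β - 2)‖ *
        ((|lam| * t ^ α) ^ k / Real.Gamma (α * k + β - 1)))
    (fun k => by apply Measurable.aestronglyMeasurable; fun_prop)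
    (fun k => Filter.Eventually.of_forall fun u hu => by
      rw [Set.uIoc_of_le ht.le] at hu
      have hu0 := hu.1.le
      rw [norm_mul, norm_div, norm_pow, norm_mul lam, Real.norm_eq_abs lam,
        Real.norm_of_nonneg (Real.rpow_nonneg hu0 α),
        Real.norm_of_nonneg (Real.Gamma_pos_of_pos (hs k)).le]
      have := Real.Gamma_pos_of_pos (hs k)
      have := hu.2
      gcongr)
    (Filter.Eventually.of_forall fun u _ => (hsum _).mul_left _)
    (by
      simp_rw [tsum_mul_left]
      exact hint.norm.mul_const _)
    (Filter.Eventually.of_forall fun u _ => (hsum _).hasSum.mul_left _)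
  rw [← key.tsum_eq]
  refine tsum_congr fun k => ?_
  have hv := aux_val t (α * k + β - 1) ht (hs k)
  have hG := (Real.Gamma_pos_of_pos (hs k)).ne'
  have hcong : (∫ u in (0:ℝ)..t, (Real.log (t - u) + Real.eulerMascheroniConstant) * u ^ (β - 2) *
        ((lam * u ^ α) ^ k / Real.Gamma (α * k + β - 1)))
      = ∫ u in (0:ℝ)..t, (lam ^ k / Real.Gamma (α * k + β - 1)) *
        ((Real.log (t - u) + Real.eulerMascheroniConstant) * u ^ (α * k + β - 1 - 1)) := by
    refine intervalIntegral.integral_congr_ae (Filter.Eventually.of_forall fun u hu => ?_)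
    rw [Set.uIoc_of_le ht.le] at hu
    have e : u ^ (α * k + β - 1 - 1) = u ^ (β - 2) * (u ^ α) ^ k := by
      rw [← Real.rpow_mul_natCast hu.1.le, ← Real.rpow_add hu.1]
      ring_nf
    rw [e, mul_pow]
    ring
  rw [hcong, intervalIntegral.integral_const_mul, hv, sub_add_cancel]
  field_simp
end
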